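/- Let p and q be probability mass functions on a finite type α with p ≠ q. Consider the modified rejection sampling procedure: draw a draft sample x̃ with probability p(x̃); accept it with probability min(1, q(x̃)/p(x̃)); if rejected, resample from the residual distribution x ↦ max(0, q(x) − p(x)) / ∑_{x'} max(0, q(x') − p(x')). Then for every x ∈ α, the probability that the final output equals x is exactly q(x); formally, ∑_{x̃ : p(x̃) > 0} p(x̃) · min(1, q(x̃)/p(x̃)) · [x̃ = x] + (∑_{x'} p(x') · (1 − min(1, q(x')/p(x')))) · (max(0, q(x) − p(x)) / ∑_{x'} max(0, q(x') − p(x'))) = q(x). -/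

import Mathlib

/-!
A draft `x` is proposed and accepted with probability `p x * min 1 (q x / p x) = min (p x) (q x)`.
Since `p` and `q` have the same total mass, the rejection probability `∑ (p - min p q)` equals
`∑ (q - min p q) = ∑ max 0 (q - p)`, the normalizer of the residual. This normalizer is nonzero
because `p ≠ q`, so it cancels and the output probability of `x` is
`min (p x) (q x) + max 0 (q x - p x) = q x`.
-/

/-- At `a = 0` the junk value `b / 0 = 0` is harmless: both sides vanish. -/
lemma mul_min_one_div {a b : ℝ} (ha : 0 ≤ a) (hb : 0 ≤ b) :
    a * min 1 (b / a) = min a b := by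
  rcases ha.eq_or_lt with rfl | ha
  · simp [hb]
  · rw [mul_min_of_nonneg _ _ ha.le, mul_one, mul_div_cancel₀ _ ha.ne']

lemma max_zero_sub_eq (a b : ℝ) : max 0 (b - a) = b - min a b := by
  rcases le_total a b with h | h <;> simp [h]

/-- **Speculative sampling recovers the target distribution.**
Given PMFs `p ≠ q` on a finite type `α`, the modified rejection sampling
scheme — draw `xd ∼ p`, accept with probability `min 1 (q xd / p xd)`,
on rejection resample from the normalized residual
`x ↦ max 0 (q x - p x) / ∑ x', max 0 (q x' - p x')` — outputs each `x`
with probability exactly `q x`. -/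
theorem speculative_sampling_recovers_target
    {α : Type*} [Fintype α] [Nonempty α] [DecidableEq α] (p q : α → ℝ)
    (hp0 : ∀ x, 0 ≤ p x) (hp1 : ∑ x, p x = 1)
    (hq0 : ∀ x, 0 ≤ q x) (hq1 : ∑ x, q x = 1)
    (hpq : p ≠ q) :
    ∀ x : α,
      (∑ xd ∈ Finset.univ.filter (fun xd => 0 < p xd),
          p xd * min 1 (q xd / p xd) * (if xd = x then (1 : ℝ) else 0))
        + (∑ x', p x' * (1 - min 1 (q x' / p x')))
            * (max 0 (q x - p x) / ∑ x', max 0 (q x' - p x'))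
      = q x := by
  intro x
  have hrej : ∑ x', p x' * (1 - min 1 (q x' / p x')) = ∑ x', max 0 (q x' - p x') := by
    simp only [mul_sub, mul_one, mul_min_one_div (hp0 _) (hq0 _), max_zero_sub_eq,
      Finset.sum_sub_distrib, hp1, hq1]
  have hne : ∑ x', max 0 (q x' - p x') ≠ 0 := by
    intro h
    rw [Finset.sum_eq_zero_iff_of_nonneg fun _ _ => le_max_left _ _] at h
    have hle : ∀ y ∈ Finset.univ, q y ≤ p y := fun y hy =>
      sub_nonpos.mp (max_eq_left_iff.mp (h y hy))
    -- A pointwise inequality between functions of equal total mass is an equality.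
    have heq := (Finset.sum_eq_sum_iff_of_le hle).mp (hq1.trans hp1.symm)
    exact hpq (funext fun y => (heq y (Finset.mem_univ y)).symm)
  have hacc : ∑ xd ∈ Finset.univ.filter (fun xd => 0 < p xd),
      p xd * min 1 (q xd / p xd) * (if xd = x then (1 : ℝ) else 0) = min (p x) (q x) := by
    simp only [mul_min_one_div (hp0 _) (hq0 _), mul_ite, mul_one, mul_zero,
      Finset.sum_ite_eq', Finset.mem_filter, Finset.mem_univ, true_and]
    split_ifs with h
    · rfl
    · have hx : p x = 0 := le_antisymm (not_lt.mp h) (hp0 x)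
      rw [hx, min_eq_left (hq0 x)]
  rw [hacc, hrej, mul_div_cancel₀ _ hne, max_zero_sub_eq]
  ring
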